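/- arXiv:2503.04547 — 3 statements merged into one kernel-verified Lean document; each statement's English description precedes it below -/
import Mathlib

section
/- Let m := p−b−1 ≥ 0 (so p = b+m+1) and let 2 ≤ ℓ ≤ p. Then the trace of the linear endomorphism f ↦ ρ(g·f) of W (i.e., the spherical function value Φ^τ(g) for the hook isotype τ = [N−b,1^b] and the Young subgroup G) equals (1/π_ℓ)·{ Σ_{k=0}^{min(m,ℓ)} ((b+1)_{m−k}/(m−k)!) · e_{ℓ−k}(n_1−1, n_2−1, …, n_ℓ−1) + (−1)^{ℓ+1} · (b−ℓ+1)_m / m! }, where (b−ℓ+1)_m = ∏_{i=0}^{m−1}(b−ℓ+1+i) (an integer, with possibly negative base). -/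
open Finset MvPolynomial

noncomputable section

/-- Value of the elementary symmetric polynomial `e_k` at the family `v` restricted to `A`. -/
def esymVal {α F : Type*} [DecidableEq α] [CommRing F] (A : Finset α) (k : ℕ) (v : α → F) : F :=
  ∑ B ∈ A.powersetCard k, ∏ i ∈ B, v i

/-- Pochhammer symbol `(a)_k = a (a+1) ⋯ (a+k-1)`. -/
def poch (a : ℚ) (k : ℕ) : ℚ := ∏ i ∈ Finset.range k, (a + (i : ℚ))

variable {p : ℕ}

/-- The index in `Fin (∑ t, n t)` of the `i`-th element of the `j`-th consecutive block. -/
def emb (n : Fin p → ℕ) (j : Fin p) (i : Fin (n j)) : Fin (∑ t, n t) :=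
  ⟨(∑ t ∈ Finset.univ.filter (fun t => t < j), n t) + i, by
    have hj : j ∉ Finset.univ.filter (fun t => t < j) := by simp
    have h2 : ∑ t ∈ insert j (Finset.univ.filter (fun t => t < j)), n t ≤ ∑ t, n t :=
      Finset.sum_le_sum_of_subset (Finset.subset_univ _)
    rw [Finset.sum_insert hj] at h2
    have := i.isLt
    omega⟩

/-- The Young subgroup: permutations mapping each block onto itself. -/
def youngGroup (n : Fin p → ℕ) : Finset (Equiv.Perm (Fin (∑ t, n t))) :=
  Finset.univ.filter fun w => ∀ (j : Fin p) (i : Fin (n j)), ∃ i' : Fin (n j),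
    w (emb n j i) = emb n j i'

/-- The action of a permutation of the variables on polynomials, as a linear map. -/
def permAct {σ : Type*} (w : Equiv.Perm σ) :
    MvPolynomial σ ℚ →ₗ[ℚ] MvPolynomial σ ℚ :=
  (MvPolynomial.rename ⇑w).toLinearMap

/-- Averaging operator over the Young subgroup. -/
def rho (n : Fin p → ℕ) :
    MvPolynomial (Fin (∑ t, n t)) ℚ →ₗ[ℚ] MvPolynomial (Fin (∑ t, n t)) ℚ :=
  ((youngGroup n).card : ℚ)⁻¹ • ∑ h ∈ youngGroup n, permAct h

/-- The alternating (Vandermonde) polynomial in the variables `x_{t 0}, …, x_{t b}`. -/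
def Delta {N b : ℕ} (t : Fin (b + 1) → Fin N) : MvPolynomial (Fin N) ℚ :=
  ∏ q ∈ Finset.univ.filter (fun q : Fin (b + 1) × Fin (b + 1) => q.1 < q.2),
    (X (t q.1) - X (t q.2))

/-- The span of all `Δ(x_{i₁},…,x_{i_{b+1}})` with `i₁ < ⋯ < i_{b+1}`. -/
def hookSpan (N b : ℕ) : Submodule ℚ (MvPolynomial (Fin N) ℚ) :=
  Submodule.span ℚ {f | ∃ t : Fin (b + 1) → Fin N, StrictMono t ∧ f = Delta t}

/-- The first `ℓ` block labels. -/
def firstL (p ℓ : ℕ) : Finset (Fin p) := Finset.univ.filter fun i => (i : ℕ) < ℓ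

/-!
On Vandermonde polynomials, the coefficient of `x_{a 0} x_{a 1}² ⋯ x_{a (b-1)}ᵇ` is a determinant,
and for a fixed index `c` these functionals, for increasing `a`, together with the polynomials
`Δ(x_c, x_{a 0}, …, x_{a (b-1)})` form a frame of the hook space. By multilinearity, averaging over
the Young subgroup replaces each row of such a determinant by its mean over a block, so the trace is
the sum of the principal `b × b` minors of the matrix `Q x y - Q x c`, where `Q = B K` is the
Markov matrix of applying `g` and then picking a uniform point of the block reached. Its columns
sum to `1`, and `det (1 + t B K) = det (1 + t K B)`; hence the trace is the coefficient of `tᵇ` in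
`(1 + t)⁻¹ det (1 + t P)`, where `P = K B` is the induced Markov matrix on the `p` blocks.

Here `P` stays at the block `k` except for a jump along an `ℓ`-cycle with probability `1 / n k`, so
only two permutations contribute to `det (t + P)`, which is therefore
`(1 + t)^(p-ℓ) π_ℓ⁻¹ (∏ ((n k - 1) (1 + t) + t) + (-1)^(ℓ+1))`. Expanding the product in elementary
symmetric polynomials and dividing by `1 + t` leaves powers of `1 + t`, of exponent `-1` in the last
term if `ℓ = p`; their binomial coefficients are the Pochhammer quotients of the formula.
-/

section Determinants

variable {R ι : Type*} [CommRing R] [Fintype ι] [DecidableEq ι]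

theorem eq_one_or_eq_of_isCycle {α : Type*} [Finite α] {c σ : Equiv.Perm α} (hc : c.IsCycle)
    (hσ : ∀ x, σ x = x ∨ σ x = c x) : σ = 1 ∨ σ = c := by
  refine or_iff_not_imp_left.mpr fun hσ1 => ?_
  obtain ⟨x, hx⟩ : ∃ x, σ x ≠ x := by
    by_contra! hfix
    exact hσ1 (Equiv.ext hfix)
  have moved : ∀ k : ℕ, σ ((c ^ k) x) ≠ (c ^ k) x := by
    intro k
    induction k with
    | zero => simpa using hx
    | succ k ih =>
      have hstep : σ ((c ^ k) x) = c ((c ^ k) x) := (hσ _).resolve_left ih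
      rw [pow_succ', Equiv.Perm.mul_apply, ← hstep]
      exact fun h => ih (σ.injective h)
  have hcx : c x ≠ x := (hσ x).resolve_left hx ▸ hx
  ext y
  by_cases hcy : c y = y
  · rcases hσ y with h | h <;> simp [h, hcy]
  · obtain ⟨k, -, rfl⟩ := (hc.sameCycle hcx hcy).exists_pow_eq'
    exact (hσ _).resolve_left (moved k)

theorem det_of_isCycle {c : Equiv.Perm ι} (hc : c.IsCycle) (M : Matrix ι ι R)
    (hM : ∀ i j, i ≠ j → i ≠ c j → M i j = 0) :
    M.det = ∏ j, M j j + (Equiv.Perm.sign c : ℤ) * ∏ j, M (c j) j := by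
  have hvanish : ∀ σ ∉ ({1, c} : Finset (Equiv.Perm ι)),
      ((Equiv.Perm.sign σ : ℤ) : R) * ∏ j, M (σ j) j = 0 := by
    intro σ hσ
    obtain ⟨j, hj⟩ : ∃ j, ¬(σ j = j ∨ σ j = c j) := by
      by_contra! h
      exact hσ (by simpa using eq_one_or_eq_of_isCycle hc h)
    rw [not_or] at hj
    rw [prod_eq_zero (f := fun j => M (σ j) j) (mem_univ j) (hM _ _ hj.1 hj.2), mul_zero]
  rw [Matrix.det_apply', ← sum_subset (subset_univ {1, c}) fun σ _ => hvanish σ,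
    sum_pair hc.ne_one.symm]
  simp

theorem det_eq_sum_cons_succAbove {b : ℕ} (M : Fin (b + 1) → Fin (b + 1) → R)
    (hM : ∀ j, M j 0 = 1) (w : Fin (b + 1) → R) (hw : w 0 = 1) :
    (Matrix.of M).det = ∑ j : Fin (b + 1), (-1) ^ (j : ℕ) *
      (Matrix.of (Fin.cons w fun i => M (j.succAbove i))).det := by
  let rows : Fin (b + 2) → Fin (b + 1) → R := Fin.cons w M
  let A : Matrix (Fin (b + 2)) (Fin (b + 2)) R := Matrix.of fun s => Fin.cons 1 (rows s)
  have hA : A.det = 0 := by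
    refine Matrix.det_zero_of_column_eq (i := 0) (j := Fin.succ 0) (by simp) fun s => ?_
    refine Fin.cases ?_ (fun s => ?_) s <;> simp [A, rows, hM, hw]
  have hminor : ∀ j : Fin (b + 1), A.submatrix (Fin.succAbove j.succ) Fin.succ =
      Matrix.of (Fin.cons w fun i => M (j.succAbove i)) := by
    intro j
    ext s k
    refine Fin.cases ?_ (fun s => ?_) s <;> simp [A, rows]
  have hminor₀ : A.submatrix (Fin.succAbove 0) Fin.succ = Matrix.of M := by
    ext
    simp [A, rows]
  rw [Matrix.det_succ_column_zero, Fin.sum_univ_succ, hminor₀] at hA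
  simp only [hminor] at hA
  simp only [A, Matrix.of_apply, Fin.cons_zero, Fin.val_zero, pow_zero, one_mul, mul_one,
    Fin.val_succ, pow_succ, mul_neg_one, neg_mul, sum_neg_distrib, ← sub_eq_add_neg] at hA
  exact sub_eq_zero.mp hA

theorem det_cons_one {b : ℕ} (q : Fin (b + 1) → Fin b → R) :
    (Matrix.of fun j => (Fin.cons 1 (q j) : Fin (b + 1) → R)).det =
      (Matrix.of fun i j => q j.succ i - q 0 i).det := by
  let B : Matrix (Fin (b + 1)) (Fin (b + 1)) R :=
    Matrix.of (Fin.cons (Fin.cons 1 (q 0)) fun j => Fin.cons 0 fun i => q j.succ i - q 0 i)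
  have hB : B.det = (Matrix.of fun i j => q j.succ i - q 0 i).det := by
    rw [Matrix.det_succ_column_zero, Fin.sum_univ_succ, ← Matrix.det_transpose (Matrix.of _)]
    simp only [B, Matrix.of_apply, Fin.cons_zero, Fin.cons_succ, Fin.val_zero, pow_zero, one_mul,
      mul_zero, zero_mul, sum_const_zero, add_zero]
    rfl
  rw [← hB]
  refine Matrix.det_eq_of_forall_row_eq_smul_add_const (Fin.cons 0 1) 0 rfl fun j k => ?_
  refine Fin.cases ?_ (fun j => ?_) j <;> refine Fin.cases ?_ (fun k => ?_) k <;> simp [B]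

theorem det_one_add_eq_mul_of_sum_col_eq (M : Matrix ι ι R) {s : R} (hM : ∀ j, ∑ i, M i j = s)
    (c : ι) : (1 + M).det = (1 + s) * (1 + Matrix.of fun i j => M i j - M i c).det := by
  let M' : Matrix ι ι R := Matrix.of fun i j => M i j - M i c
  let u : Matrix ι Unit R := Matrix.replicateCol Unit fun i => M i c
  let e : Matrix Unit ι R := Matrix.replicateRow Unit 1
  have hM' : M = M' + u * e := by
    ext i j
    simp [M', u, e, Matrix.mul_apply]
  have he : e * M' = 0 := by
    ext i j
    simp [M', e, Matrix.mul_apply, hM]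
  calc (1 + M).det = ((1 + u * e) * (1 + M')).det := by
        rw [add_mul, one_mul, mul_add, mul_one, Matrix.mul_assoc, he, Matrix.mul_zero, add_zero,
          add_assoc, ← hM']
    _ = (1 + s) * (1 + M').det := by
        rw [Matrix.det_mul, Matrix.det_one_add_replicateCol_mul_replicateRow, one_dotProduct, hM]

theorem coeff_det_one_add_X_smul_eq_sum_orderEmb [LinearOrder ι] (M : Matrix ι ι R) (b : ℕ) :
    (1 + (Polynomial.X : Polynomial R) • M.map Polynomial.C).det.coeff b =
      ∑ a : Fin b ↪o ι, (M.submatrix a a).det := by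
  rw [Matrix.coeff_det_one_add_X_smul_eq_sum_minors]
  refine (sum_bij (fun a _ => univ.map a.toEmbedding) (by simp) (fun a _ a' _ h => ?_)
    (fun s hs => ⟨s.orderEmbOfFin (mem_powersetCard_univ.mp hs), mem_univ _, by simp⟩)
    fun a _ => ?_).symm
  · exact OrderEmbedding.range_inj.mp (by simpa using congrArg (fun s : Finset ι => (s : Set ι)) h)
  · let e : Fin b ≃ (univ.map a.toEmbedding : Finset ι) :=
      (Equiv.ofInjective a a.injective).trans (Equiv.subtypeEquivProp (by ext; simp))
    rw [← Matrix.det_submatrix_equiv_self e]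
    rfl

theorem det_ite_eq_orderEmb {α : Type*} [LinearOrder α] {b : ℕ} (a s : Fin b ↪o α) :
    (Matrix.of fun k i => if a i = s k then (1 : R) else 0).det = if a = s then 1 else 0 := by
  split_ifs with h
  · subst h
    rw [← Matrix.det_one (n := Fin b)]
    congr 1
    ext k i
    simp [Matrix.one_apply, eq_comm]
  · obtain ⟨k, hk⟩ : ∃ k, s k ∉ Set.range a := by
      by_contra! hsub
      have hrange : Set.range s = Set.range a :=
        Set.eq_of_subset_of_ncard_le (Set.range_subset_iff.mpr hsub) (by
          rw [Set.ncard_range_of_injective s.injective, Set.ncard_range_of_injective a.injective])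
      exact h (OrderEmbedding.range_inj.mp hrange.symm)
    exact Matrix.det_eq_zero_of_row_eq_zero k fun i => if_neg fun h => hk ⟨i, h⟩

end Determinants

theorem trace_eq_sum_of_frame {R V ι : Type*} [CommRing R] [AddCommGroup V] [Module R V]
    [Module.Free R V] [Module.Finite R V] [Fintype ι] {φ : ι → Module.Dual R V} {w : ι → V}
    (hframe : ∀ x, ∑ i, φ i x • w i = x) (T : V →ₗ[R] V) :
    LinearMap.trace R V T = ∑ i, φ i (T (w i)) := by
  have hT : T = ∑ i, (φ i ∘ₗ T).smulRight (w i) := by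
    ext x
    simp [hframe (T x)]
  conv_lhs => rw [hT]
  simp [map_sum]

section Vandermonde

variable {R σ τ : Type*} [CommRing R] {b k : ℕ}

variable (R) in
/-- The Vandermonde polynomial `∏ (x_{t j} - x_{t i})`, over `i < j`, as a determinant. -/
def vandermondePoly (t : Fin k → σ) : MvPolynomial σ R :=
  (Matrix.vandermonde fun j => (X (t j) : MvPolynomial σ R)).det

theorem vandermondePoly_eq_zero_of_not_injective {t : Fin k → σ} (ht : ¬ Function.Injective t) :
    vandermondePoly R t = 0 :=
  Matrix.detRowAlternating.map_eq_zero_of_not_injective _ fun h =>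
    ht (h.of_comp (f := fun x (j : Fin k) => (X x : MvPolynomial σ R) ^ (j : ℕ)))

theorem vandermondePoly_comp_perm (t : Fin k → σ) (w : Equiv.Perm (Fin k)) :
    vandermondePoly R (t ∘ w) = Equiv.Perm.sign w • vandermondePoly R t :=
  Matrix.detRowAlternating.map_perm (Matrix.vandermonde fun j => (X (t j) : MvPolynomial σ R)) w

theorem rename_vandermondePoly (f : σ → τ) (t : Fin k → σ) :
    rename f (vandermondePoly R t) = vandermondePoly R (f ∘ t) := by
  rw [vandermondePoly, AlgHom.map_det]
  congr 1
  ext1 i j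
  simp [Matrix.vandermonde_apply]

theorem vandermondePoly_eq_sum_cons_succAbove (c : σ) (t : Fin (b + 1) → σ) :
    vandermondePoly R t = ∑ j : Fin (b + 1),
      (-1 : R) ^ (j : ℕ) • vandermondePoly R (Fin.cons c (t ∘ j.succAbove)) := by
  refine (det_eq_sum_cons_succAbove (Matrix.vandermonde fun j => (X (t j) : MvPolynomial σ R))
    (by simp) (fun i => X c ^ (i : ℕ)) (by simp)).trans (sum_congr rfl fun j _ => ?_)
  rw [Algebra.smul_def, map_pow, map_neg, map_one]
  congr 2
  ext1 s i
  cases s using Fin.cases <;> simp [Matrix.vandermonde_apply]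

/-- The exponent of the monomial `x_{a 0} x_{a 1}² ⋯ x_{a (b-1)}ᵇ`. -/
def stairExponent (a : Fin b → σ) : σ →₀ ℕ := ∑ i, Finsupp.single (a i) ((i : ℕ) + 1)

theorem stairExponent_apply {a : Fin b → σ} (ha : Function.Injective a) (i : Fin b) :
    stairExponent a (a i) = i + 1 := by
  classical
  simp only [stairExponent, Finsupp.finsetSum_apply, Finsupp.single_apply, ha.eq_iff, sum_ite_eq',
    mem_univ, if_true]

theorem stairExponent_inj {a s : Fin b → σ} (ha : Function.Injective a)
    (hs : Function.Injective s) : stairExponent a = stairExponent s ↔ a = s := by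
  classical
  refine ⟨fun h => funext fun i => ?_, congrArg _⟩
  have hi : stairExponent s (a i) = i + 1 := by rw [← h, stairExponent_apply ha]
  obtain ⟨j, hj⟩ : ∃ j, s j = a i := by
    by_contra! hne
    simp [stairExponent, Finsupp.finsetSum_apply, hne] at hi
  rw [← hj, stairExponent_apply hs] at hi
  rw [← hj, Fin.ext (Nat.succ_injective hi)]

variable [DecidableEq σ]

variable (R) in
/-- The row `(1, [a 0 = x], …, [a (b-1) = x])`: the coefficient functional of
`x_{a 0} x_{a 1}² ⋯ x_{a (b-1)}ᵇ` on Vandermonde polynomials is a determinant of such rows. -/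
def indicatorRow (a : Fin b → σ) (x : σ) : Fin (b + 1) → R :=
  Fin.cons 1 fun i => if a i = x then 1 else 0

theorem coeff_stairExponent_vandermondePoly {a : Fin b → σ} (ha : Function.Injective a)
    (t : Fin (b + 1) → σ) :
    coeff (stairExponent a) (vandermondePoly R t) =
      (Matrix.of fun j => indicatorRow R a (t j)).det := by
  by_cases ht : Function.Injective t
  swap
  · rw [vandermondePoly_eq_zero_of_not_injective ht, coeff_zero]
    exact (Matrix.detRowAlternating.map_eq_zero_of_not_injective _ fun h =>
      ht (h.of_comp (f := indicatorRow R a))).symm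
  rw [vandermondePoly, Matrix.det_apply', Matrix.det_apply', coeff_sum]
  refine sum_congr rfl fun w _ => ?_
  have hsucc : Function.Injective fun i : Fin b => t (w i.succ) :=
    ht.comp (w.injective.comp (Fin.succ_injective b))
  have hmonomial : ∏ i, Matrix.vandermonde (fun j => (X (t j) : MvPolynomial σ R)) (w i) i =
      monomial (stairExponent fun i : Fin b => t (w i.succ)) 1 := by
    simp [Matrix.vandermonde_apply, Fin.prod_univ_succ, stairExponent, X_pow_eq_monomial,
      monomial_sum_one]
  rw [hmonomial, ← zsmul_eq_mul, coeff_smul, coeff_monomial, zsmul_eq_mul]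
  simp only [stairExponent_inj hsucc ha, Matrix.of_apply, indicatorRow, Fin.prod_univ_succ,
    Fin.cons_zero, Fin.cons_succ, one_mul, prod_boole, mem_univ, true_imp_iff, _root_.funext_iff]
  simp only [eq_comm]

theorem coeff_stairExponent_vandermondePoly_orderEmb {σ : Type*} [LinearOrder σ] (a : Fin b ↪o σ)
    (t : Fin (b + 1) ↪o σ) : coeff (stairExponent a) (vandermondePoly R t) =
      ∑ j : Fin (b + 1), if a = (Fin.succAboveOrderEmb j).trans t then (-1) ^ (j : ℕ) else 0 := by
  rw [coeff_stairExponent_vandermondePoly a.injective, Matrix.det_succ_column_zero]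
  refine sum_congr rfl fun j _ => ?_
  have hminor : (Matrix.submatrix (Matrix.of fun j => indicatorRow R a (t j)) j.succAbove
      Fin.succ).det = if a = (Fin.succAboveOrderEmb j).trans t then 1 else 0 :=
    det_ite_eq_orderEmb a ((Fin.succAboveOrderEmb j).trans t)
  rw [hminor]
  simp [indicatorRow]

end Vandermonde

section HookSpan

theorem Delta_eq_smul_vandermondePoly {N b : ℕ} (t : Fin (b + 1) → Fin N) :
    Delta t = (-1 : ℚ) ^ #{q : Fin (b + 1) × Fin (b + 1) | q.1 < q.2} • vandermondePoly ℚ t := by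
  have hprod : vandermondePoly ℚ t = ∏ q : Fin (b + 1) × Fin (b + 1) with q.1 < q.2,
      (X (t q.2) - X (t q.1)) := by
    rw [vandermondePoly, Matrix.det_vandermonde, prod_filter, Fintype.prod_prod_type]
    simp only [← prod_filter, filter_lt_eq_Ioi]
  rw [hprod, Delta, Algebra.smul_def, map_pow, map_neg, map_one, ← prod_neg]
  simp

theorem hookSpan_eq_span_range (N b : ℕ) :
    hookSpan N b =
      Submodule.span ℚ (Set.range fun t : Fin (b + 1) ↪o Fin N => vandermondePoly ℚ t) := by
  rw [← Submodule.span_smul_eq_of_isUnit _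
    ((-1 : ℚ) ^ #{q : Fin (b + 1) × Fin (b + 1) | q.1 < q.2}) (isUnit_neg_one.pow _), hookSpan]
  congr 1
  ext f
  simp only [Set.mem_ofPred_eq, Delta_eq_smul_vandermondePoly, Set.mem_smul_set,
    Set.exists_range_iff]
  exact ⟨fun ⟨t, ht, hf⟩ => ⟨OrderEmbedding.ofStrictMono t ht, hf.symm⟩,
    fun ⟨t, hf⟩ => ⟨t, t.strictMono, hf.symm⟩⟩

theorem vandermondePoly_mem_hookSpan {N b : ℕ} (t : Fin (b + 1) → Fin N) :
    vandermondePoly ℚ t ∈ hookSpan N b := by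
  by_cases ht : Function.Injective t
  swap
  · rw [vandermondePoly_eq_zero_of_not_injective ht]
    exact zero_mem _
  have hsorted : StrictMono (t ∘ Tuple.sort t) :=
    (Tuple.monotone_sort t).strictMono_of_injective (ht.comp (Tuple.sort t).injective)
  have hmem : vandermondePoly ℚ (t ∘ Tuple.sort t) ∈ hookSpan N b :=
    hookSpan_eq_span_range N b ▸
      Submodule.subset_span ⟨OrderEmbedding.ofStrictMono _ hsorted, rfl⟩
  rw [vandermondePoly_comp_perm] at hmem
  rcases Int.units_eq_one_or (Equiv.Perm.sign (Tuple.sort t)) with h | h <;> simpa [h] using hmem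

instance hookSpan_finite (N b : ℕ) : Module.Finite ℚ (hookSpan N b) := by
  rw [hookSpan_eq_span_range]
  exact Module.Finite.span_of_finite ℚ (Set.finite_range _)

theorem sum_coeff_smul_vandermondePoly_cons {N b : ℕ} (c : Fin N) {f : MvPolynomial (Fin N) ℚ}
    (hf : f ∈ hookSpan N b) :
    ∑ a : Fin b ↪o Fin N, coeff (stairExponent a) f • vandermondePoly ℚ (Fin.cons c a) = f := by
  let expand : MvPolynomial (Fin N) ℚ →ₗ[ℚ] MvPolynomial (Fin N) ℚ :=
    ∑ a : Fin b ↪o Fin N, (lcoeff ℚ (stairExponent a)).smulRight (vandermondePoly ℚ (Fin.cons c a))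
  have hexpand : ∀ f, expand f =
      ∑ a : Fin b ↪o Fin N, coeff (stairExponent a) f • vandermondePoly ℚ (Fin.cons c a) :=
    fun f => by simp [expand]
  rw [← hexpand]
  rw [hookSpan_eq_span_range] at hf
  refine LinearMap.eqOn_span (g := LinearMap.id) ?_ hf
  rintro _ ⟨t, rfl⟩
  simp only [hexpand, coeff_stairExponent_vandermondePoly_orderEmb, sum_smul, LinearMap.id_apply]
  rw [sum_comm, vandermondePoly_eq_sum_cons_succAbove c]
  refine sum_congr rfl fun j _ => ?_
  simp only [ite_smul, zero_smul, sum_ite_eq', mem_univ, if_true]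
  rfl

end HookSpan

section FiberAverage

variable {σ κ : Type*} [Fintype σ] [DecidableEq σ] [DecidableEq κ]

/-- The permutations preserving every fiber of `β`: the Young subgroup of the partition into
fibers. -/
def fiberPerms (β : σ → κ) : Finset (Equiv.Perm σ) := {w | ∀ x, β (w x) = β x}

theorem mem_fiberPerms {β : σ → κ} {w : Equiv.Perm σ} : w ∈ fiberPerms β ↔ ∀ x, β (w x) = β x := by
  simp [fiberPerms]

theorem swap_mem_fiberPerms {β : σ → κ} {x y : σ} (h : β x = β y) :
    Equiv.swap x y ∈ fiberPerms β := by
  refine mem_fiberPerms.mpr fun z => ?_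
  rw [Equiv.swap_apply_def]
  split_ifs with hx hy
  · rw [hx, h]
  · rw [hy, h]
  · rfl

theorem sum_fiberPerms_mul_right {A : Type*} [AddCommMonoid A] {β : σ → κ} {w : Equiv.Perm σ}
    (hw : w ∈ fiberPerms β) (F : Equiv.Perm σ → A) :
    ∑ h ∈ fiberPerms β, F (h * w) = ∑ h ∈ fiberPerms β, F h :=
  sum_equiv (Equiv.mulRight w) (fun h => by
    simp only [mem_fiberPerms, Equiv.coe_mulRight, Equiv.Perm.mul_apply] at hw ⊢
    rw [← w.forall_congr_right]
    simp only [hw]) fun _ _ => rfl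

theorem exists_mem_fiberPerms_comp_eq {ι : Type*} {β : σ → κ} {s t : ι → σ}
    (ht : Function.Injective (β ∘ t)) (hst : β ∘ s = β ∘ t) : ∃ w ∈ fiberPerms β, w ∘ t = s := by
  let π : κ → Equiv.Perm σ := Function.extend (β ∘ t) (fun j => Equiv.swap (t j) (s j)) 1
  have hπ : ∀ k, π k ∈ fiberPerms β ∧ Function.Involutive (π k) := by
    intro k
    by_cases hk : ∃ j, (β ∘ t) j = k
    · obtain ⟨j, rfl⟩ := hk
      rw [show π ((β ∘ t) j) = Equiv.swap (t j) (s j) from ht.extend_apply _ _ j]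
      exact ⟨swap_mem_fiberPerms (congrFun hst j).symm, fun x => by
        rw [← Equiv.Perm.mul_apply, Equiv.swap_mul_self, Equiv.Perm.one_apply]⟩
    · rw [show π k = 1 from Function.extend_apply' _ _ _ hk]
      exact ⟨mem_fiberPerms.mpr fun _ => rfl, fun _ => rfl⟩
  have hβ : ∀ x, β (π (β x) x) = β x := fun x => mem_fiberPerms.mp (hπ _).1 x
  have hw : Function.Involutive fun x => π (β x) x := fun x => by
    simpa only [hβ] using (hπ (β x)).2 x
  refine ⟨hw.toPerm, mem_fiberPerms.mpr hβ, funext fun j => ?_⟩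
  have hπj : π (β (t j)) = Equiv.swap (t j) (s j) := ht.extend_apply _ _ j
  simp [hπj]

variable {K E F ι : Type*} [Field K] [CharZero K] [AddCommGroup E] [Module K E] [AddCommGroup F]
  [Module K F]

variable (K) in
/-- The mean of `v` over the fiber `β ⁻¹ {k}`, with the value `0` on an empty fiber. -/
def fiberMean (β : σ → κ) (v : σ → E) (k : κ) : E :=
  (#{x | β x = k} : K)⁻¹ • ∑ x with β x = k, v x

theorem sum_fiberPerms_map_comp_eq_zero (f : E [⋀^ι]→ₗ[K] F) (v : σ → E) {β : σ → κ} {t : ι → σ}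
    (ht : ¬ Function.Injective (β ∘ t)) : ∑ h ∈ fiberPerms β, f (v ∘ h ∘ t) = 0 := by
  classical
  by_cases htinj : Function.Injective t
  swap
  · exact sum_eq_zero fun h _ => f.map_eq_zero_of_not_injective _ fun hinj =>
      htinj (hinj.of_comp (f := v)).of_comp
  obtain ⟨i, j, hij, hne⟩ := Function.not_injective_iff.mp ht
  have hmem : Equiv.swap (t i) (t j) ∈ fiberPerms β := swap_mem_fiberPerms hij
  have hneg := sum_fiberPerms_mul_right hmem fun h => f (v ∘ h ∘ t)
  have hswap : ∀ h : Equiv.Perm σ, f (v ∘ ⇑(h * Equiv.swap (t i) (t j)) ∘ t) = -f (v ∘ h ∘ t) :=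
    fun h => by
      rw [Equiv.Perm.coe_mul, Function.comp_assoc, htinj.swap_comp]
      exact f.map_swap (v ∘ h ∘ t) hne
  simp only [hswap, sum_neg_distrib] at hneg
  refine (smul_eq_zero_iff_right (two_ne_zero (α := K))).mp ?_
  rw [two_smul]
  exact add_eq_zero_iff_neg_eq.mpr hneg

theorem average_fiberPerms_map_comp [Finite ι] (f : E [⋀^ι]→ₗ[K] F) (v : σ → E) (β : σ → κ)
    (t : ι → σ) : (#(fiberPerms β) : K)⁻¹ • ∑ h ∈ fiberPerms β, f (v ∘ h ∘ t) =
      f (fiberMean K β v ∘ β ∘ t) := by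
  classical
  cases nonempty_fintype ι
  by_cases ht : Function.Injective (β ∘ t)
  swap
  · rw [sum_fiberPerms_map_comp_eq_zero f v ht, smul_zero,
      f.map_eq_zero_of_not_injective _ fun hinj => ht hinj.of_comp]
  let A : ι → Finset σ := fun j => {x | β x = β (t j)}
  have hmem : ∀ s, s ∈ Fintype.piFinset A ↔ β ∘ s = β ∘ t := fun s => by
    simp [A, _root_.funext_iff]
  have hmean : f (fiberMean K β v ∘ β ∘ t) =
      (∏ j, (#(A j) : K))⁻¹ • ∑ s ∈ Fintype.piFinset A, f (v ∘ s) := by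
    rw [← prod_inv_distrib]
    refine (f.toMultilinearMap.map_smul_univ _ _).trans ?_
    congr 1
    exact f.toMultilinearMap.map_sum_finset (fun _ x => v x) A
  have htrans : ∀ s ∈ Fintype.piFinset A,
      ∑ h ∈ fiberPerms β, f (v ∘ h ∘ s) = ∑ h ∈ fiberPerms β, f (v ∘ h ∘ t) := by
    intro s hs
    obtain ⟨w, hw, rfl⟩ := exists_mem_fiberPerms_comp_eq ht ((hmem s).mp hs)
    exact sum_fiberPerms_mul_right hw fun h => f (v ∘ h ∘ t)
  have hinvariant : ∀ h ∈ fiberPerms β,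
      ∑ s ∈ Fintype.piFinset A, f (v ∘ h ∘ s) = ∑ s ∈ Fintype.piFinset A, f (v ∘ s) := by
    intro h hh
    refine sum_equiv ((Equiv.refl ι).arrowCongr h) (fun s => ?_) fun _ _ => rfl
    simp [A, mem_fiberPerms.mp hh]
  have hdouble : (#(fiberPerms β) : K) • ∑ s ∈ Fintype.piFinset A, f (v ∘ s) =
      (∏ j, (#(A j) : K)) • ∑ h ∈ fiberPerms β, f (v ∘ h ∘ t) := by
    rw [← Nat.cast_prod, ← Fintype.card_piFinset, Nat.cast_smul_eq_nsmul, Nat.cast_smul_eq_nsmul,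
      ← sum_const, ← sum_const, ← sum_congr rfl hinvariant, ← sum_congr rfl htrans, sum_comm]
  have hG : (#(fiberPerms β) : K) ≠ 0 :=
    Nat.cast_ne_zero.mpr (card_ne_zero_of_mem (mem_fiberPerms.mpr fun _ => rfl : 1 ∈ fiberPerms β))
  have hA : (∏ j, (#(A j) : K)) ≠ 0 := prod_ne_zero_iff.mpr fun j _ =>
    Nat.cast_ne_zero.mpr (card_ne_zero_of_mem (by simp [A] : t j ∈ A j))
  rw [hmean, inv_smul_eq_iff₀ hG, smul_comm, hdouble, inv_smul_smul₀ hA]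

end FiberAverage

section TraceFormula

variable {σ κ : Type*} [DecidableEq κ]

/-- The matrix whose column `x` is the point mass at the label `γ x`. -/
def labelMatrix (γ : σ → κ) : Matrix κ σ ℚ := Matrix.of fun k x => if γ x = k then 1 else 0

theorem mul_labelMatrix_apply [Fintype κ] {ι : Type*} (M : Matrix ι κ ℚ) (γ : σ → κ) (i : ι)
    (x : σ) : (M * labelMatrix γ) i x = M i (γ x) := by
  simp [Matrix.mul_apply, labelMatrix]

variable [Fintype σ]

/-- The matrix whose column `k` is the uniform probability on the fiber of `β` over `k`. -/
def fiberLaw (β : σ → κ) : Matrix σ κ ℚ :=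
  Matrix.of fun x k => if β x = k then (#{y | β y = k} : ℚ)⁻¹ else 0

/-- The matrix of the Markov chain on labels whose step from `k` picks a uniform point of the fiber
of `β` over `k`, applies `g` and reads off the new label. Columns are the source labels. -/
def transitionMatrix (β : σ → κ) (g : Equiv.Perm σ) : Matrix κ κ ℚ :=
  labelMatrix (β ∘ g) * fiberLaw β

theorem sum_fiberLaw (β : σ → κ) (y : σ) : ∑ x, fiberLaw β x (β y) = 1 := by
  have hcard : (#{x | β x = β y} : ℚ) ≠ 0 :=
    Nat.cast_ne_zero.mpr (card_ne_zero_of_mem (a := y) (by simp))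
  simp [fiberLaw, ← sum_filter, hcard]

variable [DecidableEq σ]

theorem fiberMean_indicatorRow {b : ℕ} (β : σ → κ) (a : Fin b → σ) (y : σ) :
    fiberMean ℚ β (indicatorRow ℚ a) (β y) = Fin.cons 1 fun i => fiberLaw β (a i) (β y) := by
  have hcard : (#{x | β x = β y} : ℚ) ≠ 0 :=
    Nat.cast_ne_zero.mpr (card_ne_zero_of_mem (a := y) (by simp))
  ext i
  rw [fiberMean, Pi.smul_apply, Finset.sum_apply]
  cases i using Fin.cases with
  | zero => simp [indicatorRow, hcard]
  | succ i => simp [indicatorRow, fiberLaw]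

/-- The average of the actions of the permutations preserving the fibers of `β`. -/
def fiberAverage (β : σ → κ) : MvPolynomial σ ℚ →ₗ[ℚ] MvPolynomial σ ℚ :=
  (#(fiberPerms β) : ℚ)⁻¹ • ∑ h ∈ fiberPerms β, permAct h

variable [Fintype κ]

theorem coeff_stairExponent_fiberAverage {b : ℕ} (β : σ → κ) (g : Equiv.Perm σ) {a : Fin b → σ}
    (ha : Function.Injective a) (t : Fin (b + 1) → σ) :
    coeff (stairExponent a) (fiberAverage β (permAct g (vandermondePoly ℚ t))) =
      (Matrix.of fun j => (Fin.cons 1 fun i =>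
        (fiberLaw β * labelMatrix (β ∘ g)) (a i) (t j) : Fin (b + 1) → ℚ)).det := by
  have haverage := average_fiberPerms_map_comp Matrix.detRowAlternating (indicatorRow ℚ a) β (g ∘ t)
  simp only [fiberAverage, permAct, LinearMap.smul_apply, LinearMap.sum_apply,
    AlgHom.toLinearMap_apply, rename_vandermondePoly, coeff_smul, coeff_sum,
    coeff_stairExponent_vandermondePoly ha, mul_labelMatrix_apply]
  refine haverage.trans (congrArg _ (funext fun j => ?_))
  exact fiberMean_indicatorRow β a (g (t j))

theorem trace_fiberAverage_eq_coeff_det {N b : ℕ} (β : Fin N → κ) (g : Equiv.Perm (Fin N))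
    (hW : ∀ f ∈ hookSpan N b, (fiberAverage β ∘ₗ permAct g) f ∈ hookSpan N b) (c : Fin N) :
    LinearMap.trace ℚ (hookSpan N b) ((fiberAverage β ∘ₗ permAct g).restrict hW) =
      (1 + (Polynomial.X : Polynomial ℚ) • (Matrix.of fun x y =>
        (fiberLaw β * labelMatrix (β ∘ g)) x y - (fiberLaw β * labelMatrix (β ∘ g)) x c).map
          Polynomial.C).det.coeff b := by
  let φ : (Fin b ↪o Fin N) → Module.Dual ℚ (hookSpan N b) := fun a =>
    lcoeff ℚ (stairExponent a) ∘ₗ (hookSpan N b).subtype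
  let w : (Fin b ↪o Fin N) → hookSpan N b := fun a =>
    ⟨vandermondePoly ℚ (Fin.cons c a), vandermondePoly_mem_hookSpan _⟩
  have hframe : ∀ f, ∑ a, φ a f • w a = f := fun f => Subtype.ext <| by
    simpa [φ, w] using sum_coeff_smul_vandermondePoly_cons c f.2
  rw [trace_eq_sum_of_frame hframe, coeff_det_one_add_X_smul_eq_sum_orderEmb]
  refine sum_congr rfl fun a _ => ?_
  refine (coeff_stairExponent_fiberAverage β g a.injective (Fin.cons c a)).trans ?_
  exact det_cons_one _

theorem one_add_X_mul_det_eq_reverse_charpoly (β : σ → κ) (g : Equiv.Perm σ) (c : σ) :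
    (1 + Polynomial.X) * (1 + (Polynomial.X : Polynomial ℚ) • (Matrix.of fun x y =>
        (fiberLaw β * labelMatrix (β ∘ g)) x y - (fiberLaw β * labelMatrix (β ∘ g)) x c).map
          Polynomial.C).det = (-transitionMatrix β g).charpoly.reverse := by
  let Q : Matrix σ σ ℚ := fiberLaw β * labelMatrix (β ∘ g)
  have hsum : ∀ y, ∑ x, ((Polynomial.X : Polynomial ℚ) • Q.map Polynomial.C) x y =
      Polynomial.X := by
    intro y
    simp only [Matrix.smul_apply, Matrix.map_apply, Q, mul_labelMatrix_apply, Function.comp_apply,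
      smul_eq_mul, ← mul_sum, ← map_sum, sum_fiberLaw, map_one, mul_one]
  calc _ = (1 + (Polynomial.X : Polynomial ℚ) • Q.map Polynomial.C).det := by
        rw [det_one_add_eq_mul_of_sum_col_eq _ hsum c]
        congr 3
        ext1 x y
        simp only [Matrix.of_apply, Matrix.smul_apply, Matrix.map_apply, map_sub, smul_sub, Q]
    _ = (1 + (Polynomial.X : Polynomial ℚ) • (transitionMatrix β g).map Polynomial.C).det := by
        rw [transitionMatrix, Matrix.map_mul, Matrix.map_mul, ← Matrix.smul_mul,
          Matrix.det_one_add_mul_comm, Matrix.mul_smul]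
    _ = _ := by
        rw [Matrix.reverse_charpoly, Matrix.charpolyRev, Matrix.map_neg _ (map_neg Polynomial.C),
          smul_neg, sub_neg_eq_add]

theorem coeff_of_one_add_X_mul_eq_reverse {R : Type*} [CommRing R] [IsDomain R] {D χ : Polynomial R}
    (hD : (1 + Polynomial.X) * D = χ.reverse) {F : PowerSeries R}
    (hF : (1 + PowerSeries.X) * F = (χ : PowerSeries R)) {b : ℕ} (hb : b < χ.natDegree) :
    D.coeff b = PowerSeries.coeff (χ.natDegree - 1 - b) F := by
  set q := χ.natDegree
  have hX : (1 + Polynomial.X : Polynomial R).natDegree = 1 := by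
    rw [add_comm, ← Polynomial.C_1, Polynomial.natDegree_X_add_C]
  have hX0 : (1 + Polynomial.X : Polynomial R) ≠ 0 :=
    Polynomial.ne_zero_of_natDegree_gt (hX ▸ one_pos)
  have hdeg : D.natDegree ≤ q - 1 := by
    rcases eq_or_ne D 0 with rfl | hD0
    · simp
    have hle := Polynomial.reverse_natDegree_le χ
    rw [← hD, Polynomial.natDegree_mul hX0 hD0, hX] at hle
    omega
  have hχ : χ = (1 + Polynomial.X) * D.reflect (q - 1) := by
    calc χ = Polynomial.reflect q χ.reverse := by
          ext i
          rw [Polynomial.coeff_reflect, Polynomial.coeff_reverse, Polynomial.revAt_invol]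
      _ = Polynomial.reflect 1 (1 + Polynomial.X) * D.reflect (q - 1) := by
          rw [← hD, ← Polynomial.reflect_mul _ _ hX.le hdeg, Nat.add_sub_cancel' (by omega)]
      _ = (1 + Polynomial.X) * D.reflect (q - 1) := by
          rw [← Polynomial.C_1, Polynomial.reflect_add, Polynomial.reflect_C,
            ← pow_one Polynomial.X, Polynomial.reflect_monomial, Polynomial.revAt_le le_rfl,
            add_comm]
          simp
  have hF' : F = (D.reflect (q - 1) : Polynomial R) := by
    refine mul_left_cancel₀ (Polynomial.coe_eq_zero_iff.not.mpr hX0) ?_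
    rw [← Polynomial.coe_mul, ← hχ, ← hF]
    simp
  rw [hF', Polynomial.coeff_coe, Polynomial.coeff_reflect, Polynomial.revAt_le (by omega)]
  congr 1
  omega

theorem trace_fiberAverage_eq_coeff {N b : ℕ} (β : Fin N → κ) (g : Equiv.Perm (Fin N))
    (hW : ∀ f ∈ hookSpan N b, (fiberAverage β ∘ₗ permAct g) f ∈ hookSpan N b) [NeZero N]
    (hb : b < Fintype.card κ) {F : PowerSeries ℚ}
    (hF : (1 + PowerSeries.X) * F = ((-transitionMatrix β g).charpoly : PowerSeries ℚ)) :
    LinearMap.trace ℚ (hookSpan N b) ((fiberAverage β ∘ₗ permAct g).restrict hW) =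
      PowerSeries.coeff (Fintype.card κ - 1 - b) F := by
  have hdim := Matrix.charpoly_natDegree_eq_dim (-transitionMatrix β g)
  rw [trace_fiberAverage_eq_coeff_det β g hW 0, ← hdim]
  exact coeff_of_one_add_X_mul_eq_reverse (one_add_X_mul_det_eq_reverse_charpoly β g 0) hF
    (hdim ▸ hb)

end TraceFormula

section CyclicTransition

variable {σ κ : Type*} [DecidableEq κ]

theorem transitionMatrix_apply_of_section [Fintype σ] [DecidableEq σ] {β : σ → κ}
    {g : Equiv.Perm σ} {s : κ → σ} (hs : ∀ k, β (s k) = k) {c : κ → κ}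
    (hg : ∀ y, β (g y) = if y = s (β y) then c (β y) else β y) (j k : κ) :
    transitionMatrix β g j k = (1 - (#{y | β y = k} : ℚ)⁻¹) * (if j = k then 1 else 0) +
      (#{y | β y = k} : ℚ)⁻¹ * if j = c k then 1 else 0 := by
  have hcard : (#{y | β y = k} : ℚ) ≠ 0 :=
    Nat.cast_ne_zero.mpr (card_ne_zero_of_mem (a := s k) (by simp [hs]))
  have hsum : ∑ y with β y = k, (if β (g y) = j then (1 : ℚ) else 0) =
      ((if j = c k then 1 else 0) - if j = k then 1 else 0) +
        #{y | β y = k} * if j = k then 1 else 0 := by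
    calc _ = ∑ y with β y = k, ((if y = s k then (if j = c k then (1 : ℚ) else 0) -
          (if j = k then 1 else 0) else 0) + if j = k then 1 else 0) := by
          refine sum_congr rfl fun y hy => ?_
          rw [hg y, (mem_filter.mp hy).2]
          by_cases h : y = s k <;> simp [h, eq_comm]
      _ = _ := by
          rw [sum_add_distrib, sum_ite_eq', if_pos (by simp [hs]), sum_const, nsmul_eq_mul]
  calc _ = (∑ y with β y = k, if β (g y) = j then (1 : ℚ) else 0) * (#{y | β y = k} : ℚ)⁻¹ := by
        rw [transitionMatrix, Matrix.mul_apply, sum_mul, sum_filter]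
        refine sum_congr rfl fun y _ => ?_
        by_cases hy : β y = k <;> simp [labelMatrix, fiberLaw, hy]
    _ = _ := by
        rw [hsum]
        field_simp
        ring

variable [Fintype κ]

theorem charpoly_neg_of_isCycle {R : Type*} [CommRing R] {c : Equiv.Perm κ} (hc : c.IsCycle)
    (w : κ → R) {P : Matrix κ κ R}
    (hP : ∀ j k, P j k = (1 - w k) * (if j = k then 1 else 0) + w k * if j = c k then 1 else 0) :
    (-P).charpoly = (1 + Polynomial.X) ^ (Fintype.card κ - #c.support) *
      (∏ k ∈ c.support, (Polynomial.X + Polynomial.C (1 - w k)) +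
        (-1) ^ (#c.support + 1) * ∏ k ∈ c.support, Polynomial.C (w k)) := by
  have hmoved : ∀ k, k ∈ c.support → c k ≠ k := fun k => Equiv.Perm.mem_support.mp
  have hfixed : ∀ k, k ∈ c.supportᶜ → c k = k := fun k hk =>
    Equiv.Perm.notMem_support.mp (mem_compl.mp hk)
  have hdiag : ∏ k, (-P).charmatrix k k = (1 + Polynomial.X) ^ #c.supportᶜ *
      ∏ k ∈ c.support, (Polynomial.X + Polynomial.C (1 - w k)) := by
    rw [← prod_compl_mul_prod c.support, prod_eq_pow_card (b := 1 + Polynomial.X) fun k hk => ?_]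
    · exact congrArg _ (prod_congr rfl fun k hk => by
        simp [hP, (hmoved k hk).symm, sub_eq_add_neg, add_comm])
    · simp [hP, hfixed k hk, add_comm]
  have hcycle : ∏ k, (-P).charmatrix (c k) k = (1 + Polynomial.X) ^ #c.supportᶜ *
      ∏ k ∈ c.support, Polynomial.C (w k) := by
    rw [← prod_compl_mul_prod c.support, prod_eq_pow_card (b := 1 + Polynomial.X) fun k hk => ?_]
    · exact congrArg _ (prod_congr rfl fun k hk => by
        simp [hP, Matrix.charmatrix_apply_ne, hmoved k hk])
    · simp [hP, hfixed k hk, add_comm]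
  rw [Matrix.charpoly, det_of_isCycle hc _ fun j k hjk hjck => by simp [hP, hjk, hjck],
    hdiag, hcycle, hc.sign, card_compl]
  push_cast
  ring

theorem label_apply_eq_ite_of_section [DecidableEq σ] {β : σ → κ} {s : κ → σ}
    (hs : ∀ k, β (s k) = k) {c : Equiv.Perm κ} {g : Equiv.Perm σ}
    (hmove : ∀ k ∈ c.support, g (s k) = s (c k)) (hfix : ∀ y, (∀ k ∈ c.support, y ≠ s k) → g y = y)
    (y : σ) : β (g y) = if y = s (β y) then c (β y) else β y := by
  by_cases h : ∃ k ∈ c.support, y = s k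
  · obtain ⟨k, hk, rfl⟩ := h
    simp [hmove k hk, hs]
  · push Not at h
    rw [hfix y h]
    split_ifs with hy
    · exact (Equiv.Perm.notMem_support.mp fun hk => h _ hk hy).symm
    · rfl

end CyclicTransition

section CoefficientExtraction

theorem poch_div_factorial_eq_choose (a : ℚ) (k : ℕ) :
    poch a k / k.factorial = Ring.choose (a + k - 1) k := by
  have hpoch : poch a k = (ascPochhammer ℚ k).eval a := by
    induction k with
    | zero => simp [poch]
    | succ k ih => rw [ascPochhammer_succ_eval, ← ih, poch, prod_range_succ, poch]
  rw [← Ring.multichoose_eq, div_eq_iff (Nat.cast_ne_zero.mpr k.factorial_ne_zero), hpoch,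
    ← Polynomial.ascPochhammer_smeval_eq_eval, ← Ring.factorial_nsmul_multichoose_eq_ascPochhammer,
    nsmul_eq_mul, mul_comm]

variable {κ : Type*} [DecidableEq κ]

theorem prod_map_mul_add_eq_sum_esymVal {R S : Type*} [CommRing R] [CommRing S] (φ : R →+* S)
    (A : Finset κ) (v : κ → R) (x y : S) :
    ∏ i ∈ A, (φ (v i) * y + x) =
      ∑ k ∈ range (#A + 1), φ (esymVal A (#A - k) v) * y ^ (#A - k) * x ^ k := by
  rw [prod_add, sum_powerset, ← sum_range_reflect]
  refine sum_congr rfl fun k hk => ?_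
  have hk' : #A - (#A - k) = k := Nat.sub_sub_self (mem_range_succ_iff.mp hk)
  rw [Nat.add_sub_add_right, Nat.sub_zero, esymVal, map_sum, sum_mul, sum_mul]
  refine sum_congr rfl fun B hB => ?_
  obtain ⟨hBA, hB⟩ := mem_powersetCard.mp hB
  rw [prod_mul_distrib, prod_const, prod_const, card_sdiff_of_subset hBA, hB, hk', map_prod]

theorem prod_X_add_C_one_sub_inv {A : Finset κ} {n : κ → ℚ} (hn : ∀ i ∈ A, n i ≠ 0) :
    ∏ i ∈ A, (PowerSeries.X + PowerSeries.C (1 - (n i)⁻¹)) = PowerSeries.C (∏ i ∈ A, n i)⁻¹ *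
      ∑ k ∈ range (#A + 1), PowerSeries.C (esymVal A (#A - k) fun i => n i - 1) *
        (1 + PowerSeries.X) ^ (#A - k) * PowerSeries.X ^ k := by
  rw [← prod_map_mul_add_eq_sum_esymVal, ← prod_inv_distrib, map_prod, ← prod_mul_distrib]
  refine prod_congr rfl fun i hi => ?_
  have hinv : PowerSeries.C (n i)⁻¹ * PowerSeries.C (n i) = (1 : PowerSeries ℚ) := by
    rw [← map_mul, inv_mul_cancel₀ (hn i hi), map_one]
  simp only [map_sub, map_one]
  linear_combination (-1 - PowerSeries.X) * hinv

/-- The power series `(∏_A n)⁻¹ (∑ₖ e_{#A-k}(n - 1) Xᵏ (1 + X)^(q-1-k) ± (1 + X)^(q-1-#A))`,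
where the last exponent is `-1` if `#A = q`. -/
def cycleSeries (q : ℕ) (A : Finset κ) (n : κ → ℚ) : PowerSeries ℚ :=
  PowerSeries.C (∏ i ∈ A, n i)⁻¹ *
    (∑ k ∈ range (#A + 1), PowerSeries.C (esymVal A (#A - k) fun i => n i - 1) *
        (PowerSeries.X ^ k * PowerSeries.binomialSeries ℚ ((q : ℚ) - 1 - k)) +
      (-1) ^ (#A + 1) * PowerSeries.binomialSeries ℚ ((q : ℚ) - 1 - #A))

theorem one_add_X_mul_binomialSeries {q k : ℕ} (hk : k ≤ q) :
    (1 + PowerSeries.X) * PowerSeries.binomialSeries ℚ ((q : ℚ) - 1 - k) =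
      (1 + PowerSeries.X) ^ (q - k) := by
  rw [← PowerSeries.binomialSeries_nat (R := ℚ) (q - k), Nat.cast_sub hk,
    ← pow_one (1 + PowerSeries.X), ← PowerSeries.binomialSeries_nat (R := ℚ) 1,
    ← PowerSeries.binomialSeries_add]
  congr 1
  push_cast
  ring

theorem one_add_X_mul_cycleSeries {q : ℕ} {A : Finset κ} (hA : #A ≤ q) {n : κ → ℚ}
    (hn : ∀ i ∈ A, n i ≠ 0) :
    (1 + PowerSeries.X) * cycleSeries q A n =
      (((1 + Polynomial.X) ^ (q - #A) *
        (∏ i ∈ A, (Polynomial.X + Polynomial.C (1 - (n i)⁻¹)) +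
          (-1) ^ (#A + 1) * ∏ i ∈ A, Polynomial.C (n i)⁻¹) : Polynomial ℚ) : PowerSeries ℚ) := by
  set y : PowerSeries ℚ := 1 + PowerSeries.X with hy
  have hterm : ∀ k ∈ range (#A + 1),
      y * (PowerSeries.C (esymVal A (#A - k) fun i => n i - 1) *
          (PowerSeries.X ^ k * PowerSeries.binomialSeries ℚ ((q : ℚ) - 1 - k))) =
        y ^ (q - #A) * (PowerSeries.C (esymVal A (#A - k) fun i => n i - 1) * y ^ (#A - k) *
          PowerSeries.X ^ k) := by
    intro k hk
    have hkA := mem_range_succ_iff.mp hk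
    have hpow : y ^ (q - k) = y ^ (q - #A) * y ^ (#A - k) := by
      rw [← pow_add]
      congr 1
      omega
    linear_combination (PowerSeries.C (esymVal A (#A - k) fun i => n i - 1) * PowerSeries.X ^ k) *
      ((one_add_X_mul_binomialSeries (hkA.trans hA)).trans hpow)
  have hcoe : (((1 + Polynomial.X) ^ (q - #A) *
        (∏ i ∈ A, (Polynomial.X + Polynomial.C (1 - (n i)⁻¹)) +
          (-1) ^ (#A + 1) * ∏ i ∈ A, Polynomial.C (n i)⁻¹) : Polynomial ℚ) : PowerSeries ℚ) =
      y ^ (q - #A) * (∏ i ∈ A, (PowerSeries.X + PowerSeries.C (1 - (n i)⁻¹)) +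
        (-1) ^ (#A + 1) * PowerSeries.C (∏ i ∈ A, n i)⁻¹) := by
    rw [← prod_inv_distrib]
    simp only [← Polynomial.coeToPowerSeries.ringHom_apply, map_mul, map_add, map_pow, map_prod,
      map_neg, map_one]
    simp only [Polynomial.coeToPowerSeries.ringHom_apply, Polynomial.coe_X, Polynomial.coe_C, hy]
  rw [hcoe, prod_X_add_C_one_sub_inv hn, cycleSeries]
  have hsum := sum_congr rfl hterm
  rw [← mul_sum, ← mul_sum] at hsum
  linear_combination PowerSeries.C (∏ i ∈ A, n i)⁻¹ * hsum +
    PowerSeries.C (∏ i ∈ A, n i)⁻¹ * (-1) ^ (#A + 1) * one_add_X_mul_binomialSeries hA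

theorem coeff_cycleSeries {q b : ℕ} (hb : b < q) (A : Finset κ) (n : κ → ℚ) :
    PowerSeries.coeff (q - 1 - b) (cycleSeries q A n) = (∏ i ∈ A, n i)⁻¹ *
      (∑ k ∈ range (min (q - b - 1) #A + 1),
          poch ((b : ℚ) + 1) (q - b - 1 - k) / (q - b - 1 - k).factorial *
            esymVal A (#A - k) (fun i => n i - 1) +
        (-1) ^ (#A + 1) * poch ((b : ℚ) - #A + 1) (q - b - 1) / (q - b - 1).factorial) := by
  obtain ⟨m, rfl⟩ : ∃ m, q = b + m + 1 := ⟨q - b - 1, by omega⟩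
  have hm : b + m + 1 - 1 - b = m ∧ b + m + 1 - b - 1 = m := by omega
  have hrange : (range (#A + 1)).filter (· ≤ m) = range (min m #A + 1) := by
    ext k
    simp only [mem_filter, mem_range]
    omega
  have hneg : (-1 : PowerSeries ℚ) ^ (#A + 1) = PowerSeries.C ((-1) ^ (#A + 1)) := by simp
  rw [hm.1, hm.2, cycleSeries, hneg, PowerSeries.coeff_C_mul, map_add, map_sum,
    PowerSeries.coeff_C_mul, PowerSeries.binomialSeries_coeff, ← hrange, sum_filter]
  congr 2
  · refine sum_congr rfl fun k _ => ?_
    rw [PowerSeries.coeff_C_mul, PowerSeries.coeff_X_pow_mul']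
    split_ifs with hk
    · rw [PowerSeries.binomialSeries_coeff, poch_div_factorial_eq_choose, smul_eq_mul, mul_one,
        mul_comm, Nat.cast_sub hk]
      congr 2
      push_cast
      ring
    · rw [mul_zero]
  · rw [mul_div_assoc, poch_div_factorial_eq_choose, smul_eq_mul, mul_one]
    congr 2
    push_cast
    ring

end CoefficientExtraction

theorem trace_fiberAverage_of_isCycle {κ : Type*} [Fintype κ] [DecidableEq κ] {N b : ℕ}
    {β : Fin N → κ} {s : κ → Fin N} (hs : ∀ k, β (s k) = k) {c : Equiv.Perm κ} (hc : c.IsCycle)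
    {g : Equiv.Perm (Fin N)} (hmove : ∀ k ∈ c.support, g (s k) = s (c k))
    (hfix : ∀ y, (∀ k ∈ c.support, y ≠ s k) → g y = y) (hb : b < Fintype.card κ)
    (hW : ∀ f ∈ hookSpan N b, (fiberAverage β ∘ₗ permAct g) f ∈ hookSpan N b) :
    LinearMap.trace ℚ (hookSpan N b) ((fiberAverage β ∘ₗ permAct g).restrict hW) =
      (∏ k ∈ c.support, (#{y | β y = k} : ℚ))⁻¹ *
        (∑ k ∈ range (min (Fintype.card κ - b - 1) #c.support + 1),
            poch ((b : ℚ) + 1) (Fintype.card κ - b - 1 - k) /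
                (Fintype.card κ - b - 1 - k).factorial *
              esymVal c.support (#c.support - k) (fun k => (#{y | β y = k} : ℚ) - 1) +
          (-1) ^ (#c.support + 1) * poch ((b : ℚ) - #c.support + 1) (Fintype.card κ - b - 1) /
            (Fintype.card κ - b - 1).factorial) := by
  obtain ⟨k, -⟩ := hc.nonempty_support
  have : NeZero N := ⟨(s k).pos.ne'⟩
  have hcard : ∀ k ∈ c.support, (#{y | β y = k} : ℚ) ≠ 0 := fun k _ =>
    Nat.cast_ne_zero.mpr (card_ne_zero_of_mem (a := s k) (by simp [hs]))
  have hcharpoly := charpoly_neg_of_isCycle hc _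
    (transitionMatrix_apply_of_section hs (label_apply_eq_ite_of_section hs hmove hfix))
  rw [← coeff_cycleSeries hb]
  refine trace_fiberAverage_eq_coeff β g hW hb ?_
  rw [hcharpoly, one_add_X_mul_cycleSeries (card_le_univ _) hcard]

section Blocks

variable (n : Fin p → ℕ)

/-- The label of the consecutive block containing an index. -/
def block (a : Fin (∑ t, n t)) : Fin p := (finSigmaFinEquiv.symm a).1

theorem emb_eq_finSigmaFinEquiv (j : Fin p) (i : Fin (n j)) :
    emb n j i = finSigmaFinEquiv ⟨j, i⟩ := by
  have hlt : ({t | t < j} : Finset (Fin p)) = univ.map (Fin.castLEEmb j.2.le) := by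
    ext t
    simp only [mem_filter_univ, mem_map, mem_univ, true_and]
    exact ⟨fun ht => ⟨⟨t, ht⟩, rfl⟩, fun ⟨t', ht'⟩ => ht' ▸ t'.2⟩
  ext
  simp only [finSigmaFinEquiv_apply, emb, hlt, sum_map]
  rfl

theorem block_emb (j : Fin p) (i : Fin (n j)) : block n (emb n j i) = j := by
  rw [emb_eq_finSigmaFinEquiv, block, Equiv.symm_apply_apply]

theorem block_eq_iff_exists_emb {a : Fin (∑ t, n t)} {j : Fin p} :
    block n a = j ↔ ∃ i, a = emb n j i := by
  constructor
  · rintro rfl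
    exact ⟨(finSigmaFinEquiv.symm a).2, (finSigmaFinEquiv.apply_symm_apply a).symm.trans
      (emb_eq_finSigmaFinEquiv n _ _).symm⟩
  · rintro ⟨i, rfl⟩
    exact block_emb n j i

theorem card_block_eq (j : Fin p) : #{a | block n a = j} = n j := by
  rw [card_filter, ← finSigmaFinEquiv.sum_comp, Fintype.sum_sigma]
  simp [block]

theorem youngGroup_eq_fiberPerms : youngGroup n = fiberPerms (block n) := by
  ext w
  simp only [youngGroup, mem_filter_univ, mem_fiberPerms, ← block_eq_iff_exists_emb]
  refine ⟨fun h a => ?_, fun h j i => (h _).trans (block_emb n j i)⟩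
  obtain ⟨i, hi⟩ := (block_eq_iff_exists_emb n).mp (rfl : block n a = _)
  rw [hi, h, block_emb]

theorem rho_eq_fiberAverage : rho n = fiberAverage (block n) := by
  rw [rho, fiberAverage, youngGroup_eq_fiberPerms]

end Blocks

theorem support_cycleRange {q : ℕ} [NeZero q] {i : Fin q} (hi : i ≠ 0) :
    (Fin.cycleRange i).support = Iic i := by
  ext k
  rw [Equiv.Perm.mem_support, mem_Iic]
  rcases lt_trichotomy k i with hk | rfl | hk
  · simpa [Fin.ext_iff, Fin.coe_cycleRange_of_lt hk] using hk.le
  · simpa [Fin.cycleRange_self] using hi.symm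
  · simp [Fin.cycleRange_of_gt hk, hk]

theorem firstL_succ {i : Fin p} : firstL p (i + 1) = Iic i := by
  ext k
  simp [firstL]

/-- Main theorem (formula (1.1) of the paper): the spherical function value for the hook
isotype `[N-b,1^b]`, i.e. the trace of `f ↦ ρ(g·f)` on `W`, for any `2 ≤ ℓ ≤ p`. -/
theorem sphericalFunction_hook (p b ℓ : ℕ) (n : Fin p → ℕ) (hn : ∀ j, 0 < n j)
    (hm : b + 1 ≤ p) (hℓ2 : 2 ≤ ℓ) (hℓp : ℓ ≤ p)
    (g : Equiv.Perm (Fin (∑ t, n t)))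
    (hg1 : ∀ j k : Fin p, (k : ℕ) = (j : ℕ) + 1 → (k : ℕ) < ℓ →
      g (emb n j ⟨0, hn j⟩) = emb n k ⟨0, hn k⟩)
    (hg2 : ∀ j j' : Fin p, (j : ℕ) = ℓ - 1 → (j' : ℕ) = 0 →
      g (emb n j ⟨0, hn j⟩) = emb n j' ⟨0, hn j'⟩)
    (hg3 : ∀ a, (∀ j : Fin p, (j : ℕ) < ℓ → a ≠ emb n j ⟨0, hn j⟩) → g a = a)
    (hW : ∀ f ∈ hookSpan (∑ t, n t) b,
      ((rho n).comp (permAct g)) f ∈ hookSpan (∑ t, n t) b) :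
    LinearMap.trace ℚ (hookSpan (∑ t, n t) b) (((rho n).comp (permAct g)).restrict hW)
      = (∏ i ∈ firstL p ℓ, (n i : ℚ))⁻¹ *
        ((∑ k ∈ Finset.range (min (p - b - 1) ℓ + 1),
            poch ((b : ℚ) + 1) (p - b - 1 - k) / (Nat.factorial (p - b - 1 - k)) *
              esymVal (firstL p ℓ) (ℓ - k) (fun i => (n i : ℚ) - 1))
          + (-1 : ℚ) ^ (ℓ + 1) * poch ((b : ℚ) - (ℓ : ℚ) + 1) (p - b - 1)
              / (Nat.factorial (p - b - 1))) := by
  have : NeZero p := ⟨by omega⟩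
  obtain ⟨i, rfl⟩ : ∃ i : Fin p, ℓ = i + 1 :=
    ⟨⟨ℓ - 1, by omega⟩, (Nat.sub_add_cancel (by omega)).symm⟩
  have hi : i ≠ 0 := Fin.val_ne_zero_iff.mp (by omega)
  have hsupport : (Fin.cycleRange i).support = firstL p (i + 1) :=
    (support_cycleRange hi).trans firstL_succ.symm
  have hmove : ∀ k ∈ (Fin.cycleRange i).support,
      g (emb n k ⟨0, hn k⟩) = emb n (Fin.cycleRange i k) ⟨0, hn _⟩ := by
    intro k hk
    rcases (mem_Iic.mp (support_cycleRange hi ▸ hk)).lt_or_eq with hlt | rfl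
    · have hsucc := Fin.coe_cycleRange_of_lt hlt
      exact hg1 _ _ hsucc (by omega)
    · exact hg2 _ _ rfl (by simp)
  have hfix : ∀ a, (∀ k ∈ (Fin.cycleRange i).support, a ≠ emb n k ⟨0, hn k⟩) → g a = a :=
    fun a ha => hg3 a fun k hk => ha k (by simpa [hsupport, firstL] using hk)
  have hcard : #(firstL p (i + 1)) = i + 1 := by rw [firstL_succ, Fin.card_Iic]
  revert hW
  rw [rho_eq_fiberAverage]
  intro hW
  simpa only [hsupport, hcard, card_block_eq, Fintype.card_fin] using
    trace_fiberAverage_of_isCycle (fun k => block_emb n k _) (Fin.isCycle_cycleRange hi) hmove hfix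
      (hm.trans_eq (Fintype.card_fin p).symm) hW

end
end

section
/- Let R be a commutative ring, b ≥ 0, and x_1,…,x_{b+2} ∈ R. For 1 ≤ j ≤ b+2 let f_j := ∏_{1≤i<k≤b+2, i≠j, k≠j} (x_i − x_k), the Vandermonde product of the b+1 elements obtained by deleting x_j from the list x_1,…,x_{b+2}. Then Σ_{j=1}^{b+2} (−1)^j f_j = 0. -/
/-!
The Vandermonde matrix `(y_i ^ m)` with one row more than columns becomes square when a copy of its
`k`-th column is put in front. Two columns of the result are equal, so its determinant vanishes.
Expanding along the new column, whose cofactors are up to sign the Vandermonde determinants of the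
`y_i` with `y_j` deleted, gives an alternating sum weighted by `y_j ^ k`; the weight disappears
for `k = 0`.
-/

open Finset

section VandermondeProd

variable {ι κ R : Type*} [LinearOrder ι] [LinearOrder κ] [CommRing R]

/-- The Vandermonde product of the finite family `(x i)_{i ∈ s}`, listed in increasing order of
the index. Its factors are `x i - x k` for `i < k`, the opposite of the sign convention of
`Matrix.det_vandermonde`. -/
def vandermondeProd (s : Finset ι) (x : ι → R) : R :=
  ∏ q ∈ s ×ˢ s with q.1 < q.2, (x q.1 - x q.2)

lemma vandermondeProd_map (e : κ ↪o ι) (s : Finset κ) (x : ι → R) :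
    vandermondeProd (s.map e.toEmbedding) x = vandermondeProd s (x ∘ e) := by
  simp only [vandermondeProd, ← prodMap_map_product, filter_map, prod_map]
  simp [Function.comp_def]

lemma vandermondeProd_erase (s : Finset ι) (j : ι) (x : ι → R) :
    vandermondeProd (s.erase j) x =
      ∏ q ∈ s ×ˢ s with q.1 < q.2 ∧ q.1 ≠ j ∧ q.2 ≠ j, (x q.1 - x q.2) := by
  refine prod_congr ?_ fun _ _ => rfl
  ext q
  simp only [mem_filter, mem_product, mem_erase]
  tauto

end VandermondeProd

section Fin

variable {R : Type*} [CommRing R] {n : ℕ}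

lemma vandermondeProd_univ (v : Fin n → R) :
    vandermondeProd univ v = (Matrix.vandermonde (-v)).det := by
  rw [Matrix.det_vandermonde, vandermondeProd, univ_product_univ, prod_filter,
    Fintype.prod_prod_type]
  refine prod_congr rfl fun i _ => ?_
  rw [← prod_filter, filter_lt_eq_Ioi]
  exact prod_congr rfl fun k _ => by simp only [Pi.neg_apply]; ring

lemma vandermondeProd_univ_erase (v : Fin (n + 1) → R) (j : Fin (n + 1)) :
    vandermondeProd (univ.erase j) v = (Matrix.vandermonde ((-v) ∘ j.succAbove)).det := by
  have erase_eq : univ.erase j = univ.map j.succAboveOrderEmb.toEmbedding := by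
    rw [← compl_singleton, ← Fin.image_succAbove_univ, map_eq_image]
    rfl
  rw [erase_eq, vandermondeProd_map, vandermondeProd_univ]
  rfl

lemma sum_neg_one_pow_mul_pow_mul_det_vandermonde_succAbove (v : Fin (n + 1) → R) (k : Fin n) :
    ∑ j : Fin (n + 1), (-1) ^ (j : ℕ) * v j ^ (k : ℕ) *
      (Matrix.vandermonde (v ∘ j.succAbove)).det = 0 := by
  let bordered : Matrix (Fin (n + 1)) (Fin (n + 1)) R :=
    Matrix.of fun i => Fin.cons (v i ^ (k : ℕ)) fun m : Fin n => v i ^ (m : ℕ)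
  have det_eq_zero : bordered.det = 0 :=
    Matrix.det_zero_of_column_eq (Fin.succ_ne_zero k).symm fun i => by simp [bordered]
  have minor_eq (j : Fin (n + 1)) :
      bordered.submatrix j.succAbove Fin.succ = Matrix.vandermonde (v ∘ j.succAbove) := by
    ext i m
    simp [bordered, Matrix.vandermonde_apply]
  rw [Matrix.det_succ_column_zero] at det_eq_zero
  simp_rw [minor_eq] at det_eq_zero
  exact det_eq_zero

lemma sum_neg_one_pow_mul_pow_mul_vandermondeProd_erase (v : Fin (n + 1) → R) (k : Fin n) :
    ∑ j : Fin (n + 1), (-1) ^ (j : ℕ) * v j ^ (k : ℕ) * vandermondeProd (univ.erase j) v = 0 := by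
  have det_sum := sum_neg_one_pow_mul_pow_mul_det_vandermonde_succAbove (-v) k
  calc ∑ j : Fin (n + 1), (-1) ^ (j : ℕ) * v j ^ (k : ℕ) * vandermondeProd (univ.erase j) v
      = (-1) ^ (k : ℕ) * ∑ j : Fin (n + 1), (-1) ^ (j : ℕ) * (-v) j ^ (k : ℕ) *
          (Matrix.vandermonde ((-v) ∘ j.succAbove)).det := by
        rw [mul_sum]
        refine sum_congr rfl fun j _ => ?_
        have pow_eq : v j ^ (k : ℕ) = (-1) ^ (k : ℕ) * (-v) j ^ (k : ℕ) := by
          rw [← mul_pow, Pi.neg_apply, neg_one_mul, neg_neg]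
        rw [vandermondeProd_univ_erase, pow_eq]
        ring
    _ = 0 := by rw [det_sum, mul_zero]

end Fin

/-- The order embedding `i ↦ i + 1` of `Fin n` into `ℕ`, which passes from indices starting at `0`
to indices starting at `1`. -/
def oneBasedOrderEmb (n : ℕ) : Fin n ↪o ℕ :=
  (Fin.valOrderEmb n).trans (OrderEmbedding.addRight 1)

lemma oneBasedOrderEmb_apply {n : ℕ} (i : Fin n) : oneBasedOrderEmb n i = i + 1 := rfl

lemma map_oneBasedOrderEmb_univ (n : ℕ) :
    univ.map (oneBasedOrderEmb n).toEmbedding = Icc 1 n := by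
  ext j
  simp only [mem_map, mem_univ, true_and, RelEmbedding.coe_toEmbedding, oneBasedOrderEmb_apply,
    mem_Icc]
  constructor
  · rintro ⟨i, rfl⟩
    omega
  · rintro ⟨one_le, le_n⟩
    exact ⟨⟨j - 1, by omega⟩, Nat.sub_add_cancel one_le⟩

theorem alternating_sum_vandermonde_general {R : Type*} [CommRing R] {b k : ℕ} (hk : k ≤ b)
    (x : ℕ → R) :
    ∑ j ∈ Icc 1 (b + 2), (-1) ^ j * x j ^ k * vandermondeProd ((Icc 1 (b + 2)).erase j) x = 0 := by
  let e := oneBasedOrderEmb (b + 2)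
  have fin_sum := sum_neg_one_pow_mul_pow_mul_vandermondeProd_erase (x ∘ e)
    ⟨k, Nat.lt_succ_of_le hk⟩
  rw [← map_oneBasedOrderEmb_univ, sum_map, ← neg_eq_zero, ← sum_neg_distrib, ← fin_sum]
  refine sum_congr rfl fun j _ => ?_
  rw [← map_erase, vandermondeProd_map, RelEmbedding.coe_toEmbedding, oneBasedOrderEmb_apply,
    pow_succ]
  simp [e, oneBasedOrderEmb_apply]

/-- Lemma 3.2: for arbitrary `x_1,…,x_{b+2}` in a commutative ring, the alternating sum of the
Vandermonde products `f_j` of the `b+1` elements obtained by deleting `x_j` vanishes. -/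
theorem alternating_sum_vandermonde {R : Type*} [CommRing R] (b : ℕ) (x : ℕ → R) :
    ∑ j ∈ Finset.Icc 1 (b + 2), (-1 : R) ^ j *
      ∏ q ∈ ((Finset.Icc 1 (b + 2)) ×ˢ (Finset.Icc 1 (b + 2))).filter
          (fun q => q.1 < q.2 ∧ q.1 ≠ j ∧ q.2 ≠ j),
        (x q.1 - x q.2) = 0 := by
  simpa only [vandermondeProd_erase, pow_zero, mul_one] using
    alternating_sum_vandermonde_general b.zero_le x
end

section
/- Let N ≥ b+1 and let f := Δ(x_1,…,x_{b+1}) = ∏_{1≤j<k≤b+1}(x_j − x_k) ∈ ℚ[x_1,…,x_N]. For 1 ≤ i ≤ N define the Jucys–Murphy operator on polynomials by ω_i·f := Σ_{j=1}^{i−1} (j,i)·f, where (j,i) ∈ S_N is the transposition of j and i. Then ω_i·f = (1−i)·f for 1 ≤ i ≤ b+1, and ω_i·f = (i−b−1)·f for b+2 ≤ i ≤ N. -/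
open Finset MvPolynomial

noncomputable section

/-- The Jucys–Murphy operator `ω_i f = Σ_{j<i} (j,i)·f` applied to `f`. -/
def jucysMurphy {N : ℕ} (i : Fin N) (f : MvPolynomial (Fin N) ℚ) : MvPolynomial (Fin N) ℚ :=
  ∑ j ∈ Finset.univ.filter (fun j : Fin N => j < i), permAct (Equiv.swap j i) f

/-!
The polynomial `Delta t` is the determinant of the Vandermonde matrix in the variables `-X (t r)`.
A transposition of two variables of `Delta t` therefore negates it, and a transposition of two other
variables fixes it. A transposition of the variable `X (t r)` with an outer variable `X i`
replaces the `r`-th row of the Vandermonde matrix by the powers of `-X i`; by Cramer's rule for the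
constant column `1`, the sum over `r` of the resulting determinants is `Delta t` again. Hence for
`i` beyond all variables of `Delta t`, the `b + 1` inner transpositions contribute a single
`Delta t` to `ω_i (Delta t)` and each of the other `i - (b + 1)` contributes one more.
-/

section Determinant

variable {R : Type*} [CommRing R]

lemma sum_mul_det_updateRow {n : Type*} [Fintype n] [DecidableEq n]
    (A : Matrix n n R) (w : n → R) (k : n) :
    ∑ r, A r k * (A.updateRow r w).det = w k * A.det := by
  have cramer_rule := congrFun (Matrix.mulVec_cramer A.transpose w) k
  simpa only [Matrix.mulVec, dotProduct, Matrix.transpose_apply, Matrix.cramer_transpose_apply,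
    Matrix.det_transpose, Pi.smul_apply, smul_eq_mul, mul_comm A.det] using cramer_rule

lemma vandermonde_update {n : ℕ} (v : Fin n → R) (r : Fin n) (y : R) :
    Matrix.vandermonde (Function.update v r y) =
      (Matrix.vandermonde v).updateRow r (fun k => y ^ (k : ℕ)) := by
  ext s k
  rcases eq_or_ne s r with rfl | hs
  · simp [Matrix.vandermonde_apply]
  · simp [Matrix.vandermonde_apply, hs]

lemma sum_det_vandermonde_update {n : ℕ} (v : Fin (n + 1) → R) (y : R) :
    ∑ r, (Matrix.vandermonde (Function.update v r y)).det = (Matrix.vandermonde v).det := by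
  simpa [vandermonde_update, Matrix.vandermonde_apply] using
    sum_mul_det_updateRow (Matrix.vandermonde v) (fun k => y ^ (k : ℕ)) 0

end Determinant

section Delta

variable {N b : ℕ} (t : Fin (b + 1) → Fin N)

-- The signs account for `Matrix.det_vandermonde` having the factors `v j - v i` for `i < j`.
lemma Delta_eq_det_vandermonde :
    Delta t = (Matrix.vandermonde fun r => (-X (t r) : MvPolynomial (Fin N) ℚ)).det := by
  rw [Matrix.det_vandermonde, Delta, prod_filter, Fintype.prod_prod_type]
  refine prod_congr rfl fun r _ => ?_
  rw [← prod_filter, filter_lt_eq_Ioi]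
  exact prod_congr rfl fun s _ => by ring

lemma Delta_comp_perm (s : Equiv.Perm (Fin (b + 1))) :
    Delta (t ∘ s) = (Equiv.Perm.sign s : ℤ) * Delta t := by
  rw [Delta_eq_det_vandermonde, Delta_eq_det_vandermonde, ← Matrix.det_permute]
  rfl

lemma sum_Delta_update (i : Fin N) : ∑ r, Delta (Function.update t r i) = Delta t := by
  have neg_X_update (r : Fin (b + 1)) :
      (fun s => (-X (Function.update t r i s) : MvPolynomial (Fin N) ℚ)) =
        Function.update (fun s => -X (t s)) r (-X i) :=
    Function.comp_update (fun a => (-X a : MvPolynomial (Fin N) ℚ)) t r i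
  simp only [Delta_eq_det_vandermonde, neg_X_update, sum_det_vandermonde_update]

lemma permAct_Delta (w : Equiv.Perm (Fin N)) : permAct w (Delta t) = Delta (w ∘ t) := by
  simp [permAct, Delta, map_prod]

variable {t}

lemma permAct_swap_Delta_of_notMem_range {i j : Fin N} (hj : j ∉ Set.range t)
    (hi : i ∉ Set.range t) : permAct (Equiv.swap j i) (Delta t) = Delta t := by
  have swap_comp : Equiv.swap j i ∘ t = t := funext fun r =>
    Equiv.swap_apply_of_ne_of_ne (fun h => hj ⟨r, h⟩) (fun h => hi ⟨r, h⟩)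
  rw [permAct_Delta, swap_comp]

lemma permAct_swap_Delta (ht : Function.Injective t) {r s : Fin (b + 1)} (hrs : r ≠ s) :
    permAct (Equiv.swap (t r) (t s)) (Delta t) = -Delta t := by
  rw [permAct_Delta, ht.swap_comp, Delta_comp_perm, Equiv.Perm.sign_swap hrs]
  simp

lemma permAct_swap_Delta_eq_Delta_update (ht : Function.Injective t) (r : Fin (b + 1))
    {i : Fin N} (hi : i ∉ Set.range t) :
    permAct (Equiv.swap (t r) i) (Delta t) = Delta (Function.update t r i) := by
  have swap_comp : Equiv.swap (t r) i ∘ t = Function.update t r i := by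
    funext s
    rcases eq_or_ne s r with rfl | hs
    · simp
    · rw [Function.update_of_ne hs]
      exact Equiv.swap_apply_of_ne_of_ne (ht.ne hs) (fun h => hi ⟨s, h⟩)
  rw [permAct_Delta, swap_comp]

lemma sum_permAct_swap_Delta (ht : Function.Injective t) {i : Fin N} (hi : i ∉ Set.range t) :
    ∑ r, permAct (Equiv.swap (t r) i) (Delta t) = Delta t := by
  simp only [permAct_swap_Delta_eq_Delta_update ht _ hi, sum_Delta_update]

end Delta

section JucysMurphy

variable {N b : ℕ} {t : Fin (b + 1) → Fin N} {i : Fin N}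

lemma jucysMurphy_eq_sum_Iio (i : Fin N) (f : MvPolynomial (Fin N) ℚ) :
    jucysMurphy i f = ∑ j ∈ Iio i, permAct (Equiv.swap j i) f := by
  rw [jucysMurphy, filter_gt_eq_Iio]

lemma jucysMurphy_Delta_of_Iic_subset_range (ht : Function.Injective t)
    (hi : Set.Iic i ⊆ Set.range t) : jucysMurphy i (Delta t) = (-(i : ℚ)) • Delta t := by
  have swap_neg : ∀ j ∈ Iio i, permAct (Equiv.swap j i) (Delta t) = -Delta t := by
    intro j hj
    have hji : j < i := mem_Iio.mp hj
    obtain ⟨r, rfl⟩ := hi hji.le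
    obtain ⟨s, rfl⟩ := hi Set.self_mem_Iic
    exact permAct_swap_Delta ht (ne_of_apply_ne t hji.ne)
  rw [jucysMurphy_eq_sum_Iio, sum_congr rfl swap_neg, sum_const, Fin.card_Iio, smul_neg, neg_smul,
    Nat.cast_smul_eq_nsmul]

lemma jucysMurphy_Delta_of_range_subset_Iio (ht : Function.Injective t)
    (hi : Set.range t ⊆ Set.Iio i) :
    jucysMurphy i (Delta t) = ((i : ℚ) - (b : ℚ)) • Delta t := by
  have i_notMem : i ∉ Set.range t := fun h => lt_irrefl i (hi h)
  have image_subset : univ.image t ⊆ Iio i := by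
    simpa [← coe_subset] using hi
  have sum_inner : ∑ j ∈ univ.image t, permAct (Equiv.swap j i) (Delta t) = Delta t := by
    rw [sum_image ht.injOn, sum_permAct_swap_Delta ht i_notMem]
  have swap_outer : ∀ j ∈ Iio i \ univ.image t,
      permAct (Equiv.swap j i) (Delta t) = Delta t := fun j hj =>
    permAct_swap_Delta_of_notMem_range (by simpa using (mem_sdiff.mp hj).2) i_notMem
  have card_outer : (#(Iio i \ univ.image t) : ℚ) = i - (b + 1) := by
    rw [cast_card_sdiff image_subset, Fin.card_Iio, card_image_of_injective _ ht, card_fin,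
      Nat.cast_succ]
  rw [jucysMurphy_eq_sum_Iio, ← sum_sdiff image_subset, sum_inner, sum_congr rfl swap_outer,
    sum_const, ← Nat.cast_smul_eq_nsmul ℚ, card_outer]
  module

theorem jucysMurphy_Delta_general (ht : Function.Injective t) (i : Fin N) :
    (Set.Iic i ⊆ Set.range t → jucysMurphy i (Delta t) = (-(i : ℚ)) • Delta t) ∧
    (Set.range t ⊆ Set.Iio i → jucysMurphy i (Delta t) = ((i : ℚ) - (b : ℚ)) • Delta t) :=
  ⟨jucysMurphy_Delta_of_Iic_subset_range ht, jucysMurphy_Delta_of_range_subset_Iio ht⟩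

end JucysMurphy

/-- Proposition 3.3: the alternating polynomial `Δ(x_1,…,x_{b+1})` is a simultaneous
eigenfunction of the Jucys–Murphy operators, with eigenvalues the contents of the hook
tableau `T₀` (stated here in 0-based indexing: the 1-based index `i` corresponds to the
0-based index `i-1`, so the eigenvalue `1-i` reads `-i` and `i-b-1` reads `i-b`). -/
theorem jucysMurphy_Delta (N b : ℕ) (hbN : b + 1 ≤ N)
    (f : MvPolynomial (Fin N) ℚ)
    (hf : f = Delta (fun r : Fin (b + 1) => Fin.castLE hbN r)) (i : Fin N) :
    ((i : ℕ) < b + 1 → jucysMurphy i f = (-(i : ℚ)) • f) ∧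
    (b + 1 ≤ (i : ℕ) → jucysMurphy i f = ((i : ℚ) - (b : ℚ)) • f) := by
  obtain ⟨inner, outer⟩ := jucysMurphy_Delta_general (Fin.castLE_injective hbN) i
  subst hf
  exact ⟨fun hi => inner fun j hj => ⟨⟨j, lt_of_le_of_lt hj hi⟩, rfl⟩,
    fun hi => outer (Set.range_subset_iff.mpr fun r => r.isLt.trans_le hi)⟩

end
end
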